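/- Let p be a distribution on {-1,1}^n, t ∈ {1, …, n−1}, let π be a sequence of t+1 distinct indices from [n], let y ∈ {-1,1}^n, and let d ≥ 1 be an integer. Suppose there are d+1 distinct indices i₁, …, i_{d+1} ∈ [t+1] such that for each k ∈ [d+1], writing T_k = S(π_{-i_k}) and z_k = y_{T̄_k}, the edge {z_k, z_k^{(π(i_k))}} is uneven with respect to p_{T̄_k} and p_{T̄_k}(z_k) > p_{T̄_k}(z_k^{(π(i_k))}). Then for every k ∈ [d+1], the restricted distribution p_{|ρ(π_{-i_k}, y)} is well defined and ‖μ(p_{|ρ(π_{-i_k}, y)})‖₂ ≥ √d / 20. -/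

import Mathlib

/-!
Let `U` be the set of entries of `π`, let `a_k = π(i_k)`, and let `M` be the mass of the points that
agree with `y` outside `U`. Splitting these points by their `a_k`-th coordinate gives
`M = A_k + B_k` (`offMass_erase_add`), where `A_k` and `B_k` are the two endpoint masses of the
`k`-th edge. Unevenness means `B_k ≤ A_k / 3` (`le_third_of_uneven`), so `B_k ≤ M / 4` and
`A_k ≥ 3 M / 4`, where `M` does not depend on `k`. Hence, for `j ≠ k`, conditioning on
`x_{a_k} = y_{a_k}` leaves `x_{a_j} ≠ y_{a_j}` with probability at most `B_j / A_k ≤ 1 / 3`, and the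
mean of the coordinate `a_j` is at least `1 / 3` in absolute value (`ninth_le_condMean_sq`).
There are `d` such coordinates, so the norm of the mean vector is at least `√d / 3 ≥ √d / 20`.
-/

open scoped Classical

noncomputable section

namespace Subcube

/-- The ±1 value of a Boolean coordinate. -/
def sgn (b : Bool) : ℝ := if b then 1 else -1

/-- Flip coordinate `i` of `x`. -/
def flipAt {ι : Type*} [DecidableEq ι] (i : ι) (x : ι → Bool) : ι → Bool :=
  Function.update x i (!(x i))

/-- `p` is a probability mass function. -/
def IsDist {α : Type*} [Fintype α] (p : α → ℝ) : Prop :=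
  (∀ a, 0 ≤ p a) ∧ ∑ a, p a = 1

/-- Total variation distance to the uniform distribution. -/
def dTVU {α : Type*} [Fintype α] (p : α → ℝ) : ℝ :=
  (1/2) * ∑ a, |p a - 1 / (Fintype.card α : ℝ)|

/-- Probability mass of the event that a sample from `p` agrees with `y` outside `S`. -/
def offMass {n : ℕ} (p : (Fin n → Bool) → ℝ) (S : Finset (Fin n)) (y : Fin n → Bool) : ℝ :=
  ∑ x : Fin n → Bool, if ∀ j ∉ S, x j = y j then p x else 0

/-- Projection of `p` to the coordinates outside `S`. -/
def projDist {n : ℕ} (p : (Fin n → Bool) → ℝ) (S : Finset (Fin n)) :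
    ({i : Fin n // i ∉ S} → Bool) → ℝ :=
  fun u => ∑ x : Fin n → Bool, if ∀ i : {i : Fin n // i ∉ S}, x i.1 = u i then p x else 0

/-- Restriction of `p` with star set `S` and non-star coordinates set according to `y`. -/
def restrictDist {n : ℕ} (p : (Fin n → Bool) → ℝ) (S : Finset (Fin n)) (y : Fin n → Bool) :
    ({i : Fin n // i ∈ S} → Bool) → ℝ :=
  fun z =>
    (∑ x : Fin n → Bool,
      if (∀ i : {i : Fin n // i ∈ S}, x i.1 = z i) ∧ (∀ j ∉ S, x j = y j) then p x else 0)
      / offMass p S y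

/-- Mean of coordinate `i` of `p` conditioned on agreeing with `y` outside `S`
(the coordinate `i` of the mean vector of the restriction with star set `S`, for `i ∈ S`). -/
def condMean {n : ℕ} (p : (Fin n → Bool) → ℝ) (S : Finset (Fin n)) (y : Fin n → Bool)
    (i : Fin n) : ℝ :=
  (∑ x : Fin n → Bool, if ∀ j ∉ S, x j = y j then p x * sgn (x i) else 0) / offMass p S y

/-- Mean vector of a distribution on a Boolean cube. -/
def meanVec {ι : Type*} [Fintype ι] (p : (ι → Bool) → ℝ) : ι → ℝ :=
  fun i => ∑ x : ι → Bool, p x * sgn (x i)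

/-- Squared Euclidean norm. -/
def normSq {ι : Type*} [Fintype ι] (v : ι → ℝ) : ℝ := ∑ i, v i ^ 2

/-- Euclidean norm. -/
def l2norm {ι : Type*} [Fintype ι] (v : ι → ℝ) : ℝ := Real.sqrt (normSq v)

theorem offMass_nonneg {n : ℕ} {p : (Fin n → Bool) → ℝ} (hp : ∀ x, 0 ≤ p x)
    (S : Finset (Fin n)) (y : Fin n → Bool) : 0 ≤ offMass p S y :=
  Finset.sum_nonneg fun x _ => by split_ifs <;> simp [hp]

theorem agree_erase_iff {n : ℕ} {U : Finset (Fin n)} {a : Fin n} (x y : Fin n → Bool) :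
    (∀ j ∉ U.erase a, x j = y j) ↔ (∀ j ∉ U, x j = y j) ∧ x a = y a := by
  refine ⟨fun h => ⟨fun j hj => h j fun h' => hj (Finset.mem_of_mem_erase h'), h a (by simp)⟩, ?_⟩
  rintro ⟨h, ha⟩ j hj
  by_cases hja : j = a
  · rw [hja, ha]
  · exact h j fun h' => hj (Finset.mem_erase.2 ⟨hja, h'⟩)

theorem agree_erase_flip_iff {n : ℕ} {U : Finset (Fin n)} {a : Fin n} (ha : a ∈ U)
    (x y : Fin n → Bool) :
    (∀ j ∉ U.erase a, x j = flipAt a y j) ↔ (∀ j ∉ U, x j = y j) ∧ x a ≠ y a := by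
  rw [agree_erase_iff]
  refine and_congr (forall₂_congr fun j hj => ?_) ?_
  · have : j ≠ a := fun h => hj (h ▸ ha)
    simp [flipAt, this]
  · simp only [flipAt, Function.update_self]
    cases x a <;> cases y a <;> simp

/-- The two endpoint masses of an edge in direction `a` add up to the mass obtained by freeing the
coordinate `a`. -/
theorem offMass_erase_add {n : ℕ} (p : (Fin n → Bool) → ℝ) {U : Finset (Fin n)} {a : Fin n}
    (ha : a ∈ U) (y : Fin n → Bool) :
    offMass p (U.erase a) y + offMass p (U.erase a) (flipAt a y) = offMass p U y := by
  unfold offMass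
  rw [← Finset.sum_add_distrib]
  refine Finset.sum_congr rfl fun x _ => ?_
  simp only [agree_erase_iff x y, agree_erase_flip_iff ha]
  by_cases h : ∀ j ∉ U, x j = y j <;> by_cases h' : x a = y a <;> simp [h, h']

theorem le_third_of_uneven {A B : ℝ} (hB : 0 ≤ B) (hBA : B < A)
    (h : 2 / 3 ≤ |A - B| / max A B) : B ≤ A / 3 := by
  rw [max_eq_left hBA.le, abs_of_pos (sub_pos.2 hBA), le_div_iff₀ (hB.trans_lt hBA)] at h
  linarith

/-- Conditioned on agreeing with `y` outside `U.erase a`, the coordinate `b` is biased towards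
`y b`: the mass on which it disagrees is at most the mass of the flipped endpoint in direction
`b`. -/
theorem sub_le_sgn_mul_sum {n : ℕ} {p : (Fin n → Bool) → ℝ} (hp : ∀ x, 0 ≤ p x)
    {U : Finset (Fin n)} {a b : Fin n} (hb : b ∈ U) (y : Fin n → Bool) :
    offMass p (U.erase a) y - 2 * offMass p (U.erase b) (flipAt b y) ≤
      sgn (y b) * ∑ x : Fin n → Bool,
        if ∀ j ∉ U.erase a, x j = y j then p x * sgn (x b) else 0 := by
  unfold offMass
  rw [Finset.mul_sum, Finset.mul_sum, ← Finset.sum_sub_distrib]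
  refine Finset.sum_le_sum fun x _ => ?_
  have hx := hp x
  simp only [agree_erase_iff x y, agree_erase_flip_iff hb]
  by_cases h : ∀ j ∉ U, x j = y j
  · simp only [eq_true h, true_and]
    by_cases h' : x a = y a
    · cases hxb : x b <;> cases hyb : y b <;> simp [h', sgn] <;> linarith
    · by_cases h'' : x b = y b <;> simp [h', h'', hx]
  · simp [h]

/-- If the edges at `y` in the two directions `a`, `b` of `U` are both uneven, with `y` as the
heavier endpoint, then conditioning on `y a` leaves a mean of absolute value at least `1 / 3` in
the coordinate `b`. -/
theorem ninth_le_condMean_sq {n : ℕ} {p : (Fin n → Bool) → ℝ} (hp : ∀ x, 0 ≤ p x)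
    {U : Finset (Fin n)} {a b : Fin n} (ha : a ∈ U) (hb : b ∈ U) (y : Fin n → Bool)
    (hpos : 0 < offMass p (U.erase a) y)
    (hA : offMass p (U.erase a) (flipAt a y) ≤ offMass p (U.erase a) y / 3)
    (hB : offMass p (U.erase b) (flipAt b y) ≤ offMass p (U.erase b) y / 3) :
    1 / 9 ≤ condMean p (U.erase a) y b ^ 2 := by
  have h1 := offMass_erase_add p ha y
  have h2 := offMass_erase_add p hb y
  have h3 : 1 / 3 ≤ sgn (y b) * condMean p (U.erase a) y b := by
    rw [condMean, ← mul_div_assoc, le_div_iff₀ hpos]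
    refine le_trans ?_ (sub_le_sgn_mul_sum hp hb y)
    linarith
  have h4 : sgn (y b) ^ 2 = 1 := by cases y b <;> norm_num [sgn]
  have h5 : (sgn (y b) * condMean p (U.erase a) y b) ^ 2 = condMean p (U.erase a) y b ^ 2 := by
    rw [mul_pow, h4, one_mul]
  rw [← h5]
  nlinarith

/-- Let `π` be a sequence of `t+1` distinct indices, `y ∈ {-1,1}^n`, `d ≥ 1`,
and let `i₁,…,i_{d+1}` (encoded by the injective `ι`) be distinct indices in `[t+1]` such that
for each `k`, with `T_k = S(π_{-i_k})`, the edge `{y_{T̄_k}, y_{T̄_k}^{(π(i_k))}}` is uneven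
w.r.t. `p_{T̄_k}` and `p_{T̄_k}(y_{T̄_k}) > p_{T̄_k}(y_{T̄_k}^{(π(i_k))})`. Then for every `k`
the restriction `p_{|ρ(π_{-i_k},y)}` is well defined and `‖μ(p_{|ρ(π_{-i_k},y)})‖₂ ≥ √d/20`. -/
theorem stmt12 (n t d : ℕ) (ht : 1 ≤ t) (htn : t < n) (hd : 1 ≤ d)
    (p : (Fin n → Bool) → ℝ) (hp : IsDist p)
    (π : Fin (t+1) → Fin n) (hπ : Function.Injective π)
    (y : Fin n → Bool)
    (ι : Fin (d+1) → Fin (t+1)) (hι : Function.Injective ι)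
    (hyp : ∀ k : Fin (d+1),
      offMass p (((Finset.univ : Finset (Fin (t+1))).erase (ι k)).image π) y ≠
        offMass p (((Finset.univ : Finset (Fin (t+1))).erase (ι k)).image π)
          (flipAt (π (ι k)) y) ∧
      2/3 ≤
        |offMass p (((Finset.univ : Finset (Fin (t+1))).erase (ι k)).image π) y -
            offMass p (((Finset.univ : Finset (Fin (t+1))).erase (ι k)).image π)
              (flipAt (π (ι k)) y)| /
          max (offMass p (((Finset.univ : Finset (Fin (t+1))).erase (ι k)).image π) y)
            (offMass p (((Finset.univ : Finset (Fin (t+1))).erase (ι k)).image π)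
              (flipAt (π (ι k)) y)) ∧
      offMass p (((Finset.univ : Finset (Fin (t+1))).erase (ι k)).image π)
          (flipAt (π (ι k)) y) <
        offMass p (((Finset.univ : Finset (Fin (t+1))).erase (ι k)).image π) y) :
    ∀ k : Fin (d+1),
      0 < offMass p (((Finset.univ : Finset (Fin (t+1))).erase (ι k)).image π) y ∧
      Real.sqrt d / 20 ≤
        Real.sqrt (∑ j ∈ ((Finset.univ : Finset (Fin (t+1))).erase (ι k)).image π,
          (condMean p (((Finset.univ : Finset (Fin (t+1))).erase (ι k)).image π) y j) ^ 2) := by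
  have hU : ∀ i, ((Finset.univ : Finset (Fin (t+1))).erase i).image π
      = ((Finset.univ : Finset (Fin (t+1))).image π).erase (π i) :=
    fun i => Finset.image_erase hπ _ _
  have hmem : ∀ i, π i ∈ (Finset.univ : Finset (Fin (t+1))).image π := fun i => by simp
  simp only [hU] at hyp ⊢
  generalize (Finset.univ : Finset (Fin (t+1))).image π = U at hyp hmem ⊢
  have hthird : ∀ k, offMass p (U.erase (π (ι k))) (flipAt (π (ι k)) y) ≤
      offMass p (U.erase (π (ι k))) y / 3 := fun k =>
    le_third_of_uneven (offMass_nonneg hp.1 _ _) (hyp k).2.2 (hyp k).2.1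
  intro k
  have hpos : 0 < offMass p (U.erase (π (ι k))) y :=
    (offMass_nonneg hp.1 _ _).trans_lt (hyp k).2.2
  refine ⟨hpos, ?_⟩
  have hinj : Function.Injective fun l => π (ι l) := hπ.comp hι
  have hsub : ((Finset.univ : Finset (Fin (d+1))).erase k).image (fun l => π (ι l)) ⊆
      U.erase (π (ι k)) := by
    intro b hb
    obtain ⟨l, hl, rfl⟩ := Finset.mem_image.1 hb
    exact Finset.mem_erase.2 ⟨fun h => Finset.ne_of_mem_erase hl (hinj h), hmem _⟩
  have hsum : (d : ℝ) / 9 ≤ ∑ j ∈ U.erase (π (ι k)), condMean p (U.erase (π (ι k))) y j ^ 2 := by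
    refine le_trans ?_ (Finset.sum_le_sum_of_subset_of_nonneg hsub fun _ _ _ => sq_nonneg _)
    rw [Finset.sum_image fun _ _ _ _ h => hinj h]
    have hcard := Finset.card_nsmul_le_sum ((Finset.univ : Finset (Fin (d+1))).erase k)
      (fun l => condMean p (U.erase (π (ι k))) y (π (ι l)) ^ 2) (1 / 9)
      fun l _ => ninth_le_condMean_sq hp.1 (hmem _) (hmem _) y hpos (hthird k) (hthird l)
    simp only [Finset.card_erase_of_mem (Finset.mem_univ k), Finset.card_univ, Fintype.card_fin,
      Nat.add_sub_cancel, nsmul_eq_mul] at hcard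
    linarith
  refine Real.le_sqrt_of_sq_le ?_
  rw [div_pow, Real.sq_sqrt (Nat.cast_nonneg d)]
  have hd0 : (0 : ℝ) ≤ d := Nat.cast_nonneg d
  linarith

end Subcube
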